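/- arXiv:1709.08150 — 3 statements merged into one kernel-verified Lean document; each statement's English description precedes it below -/
import Mathlib

section
/- In the consecutive prime power construction, for every nonzero β ∈ K one has N_β^⊤ = N_{−β}, and moreover N_β · N_{−β} = q²·I_{(q+1)q²} − q·(I_{q+1} ⊗ I_q ⊗ J_q) + I_{q+1} ⊗ J_{q²} + (q−1)·J_{(q+1)q²}. -/
open Matrix Kronecker BigOperators

noncomputable section

/-- The all-ones matrix. -/
def allOnes (n : Type*) : Matrix n n ℝ := Matrix.of fun _ _ => 1

/-- The auxiliary matrix `C_α` for `α ∈ F`: the `((a,u),(b,v))`-entry is `1` iff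
`v − u = α·(b − a)`. -/
def auxC {F : Type*} [Field F] [Fintype F] [DecidableEq F] (α : F) :
    Matrix (F × F) (F × F) ℝ :=
  Matrix.of fun p r => if r.2 - p.2 = α * (r.1 - p.1) then 1 else 0

/-- The permutation matrix `P_{β,γ}` with `(a,b)`-entry `1` iff `β·(−a+b) = γ`. -/
def permP {K : Type*} [Field K] [DecidableEq K] (β γ : K) : Matrix K K ℝ :=
  Matrix.of fun a b => if β * (-a + b) = γ then 1 else 0

/-- The matrix `N_β = Σ_{γ∈K∖{0}} P_{β,γ} ⊗ C_{ψ(γ)}` of the consecutive prime power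
construction, where `ψ : K∖{0} → F` is a fixed bijection. -/
def NN {F K : Type*} [Field F] [Fintype F] [DecidableEq F]
    [Field K] [Fintype K] [DecidableEq K]
    (ψ : {x : K // x ≠ 0} ≃ F) (β : K) :
    Matrix (K × (F × F)) (K × (F × F)) ℝ :=
  ∑ γ : {x : K // x ≠ 0}, permP β (γ : K) ⊗ₖ auxC (ψ γ)


section helpers
variable {F K : Type*} [Field F] [Fintype F] [DecidableEq F] [Field K] [Fintype K] [DecidableEq K]

def gg (ψ : {x : K // x ≠ 0} ≃ F) (x : K) : Matrix (F × F) (F × F) ℝ :=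
  if h : x ≠ 0 then auxC (ψ ⟨x, h⟩) else 0

theorem NN_apply (ψ : {x : K // x ≠ 0} ≃ F) (β a b : K) (p r : F × F) :
    NN ψ β (a, p) (b, r) = gg ψ (β * (-a + b)) p r := by
  unfold NN gg
  rw [Matrix.sum_apply]
  simp only [Matrix.kroneckerMap_apply, permP, Matrix.of_apply]
  split_ifs with h
  · rw [Finset.sum_eq_single ⟨_, h⟩]
    · simp
    · intro y _ hy
      rw [if_neg, zero_mul]
      intro h2
      exact hy (Subtype.ext h2.symm)
    · simp
  · apply Finset.sum_eq_zero
    intro y _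
    rw [if_neg, zero_mul]
    intro h2
    exact h (h2 ▸ y.2)

theorem auxC_symm (α : F) (p r : F × F) : auxC α p r = auxC α r p := by
  simp only [auxC, Matrix.of_apply]
  congr 1
  apply propext
  constructor <;> intro h <;> linear_combination -h

theorem gg_symm (ψ : {x : K // x ≠ 0} ≃ F) (x : K) (p r : F × F) :
    gg ψ x p r = gg ψ x r p := by
  unfold gg
  split_ifs
  · exact auxC_symm _ _ _
  · rfl

theorem auxC_mul_apply (α α' : F) (p r : F × F) :
    (auxC α * auxC α') p r =
      ∑ c : F, if r.2 - p.2 - α * (c - p.1) = α' * (r.1 - c) then (1 : ℝ) else 0 := by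
  rw [Matrix.mul_apply, Fintype.sum_prod_type]
  apply Finset.sum_congr rfl
  intro c _
  simp only [auxC, Matrix.of_apply]
  rw [Finset.sum_eq_single (p.2 + α * (c - p.1))]
  · simp [sub_sub]
  · intro w _ hw
    rw [if_neg, zero_mul]
    intro h
    exact hw (by linear_combination h)
  · simp

theorem auxC_mul_self (α : F) (p r : F × F) :
    (auxC α * auxC α) p r = (Fintype.card F : ℝ) * auxC α p r := by
  rw [auxC_mul_apply]
  have : ∀ c : F, (r.2 - p.2 - α * (c - p.1) = α * (r.1 - c)) ↔ r.2 - p.2 = α * (r.1 - p.1) := by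
    intro c
    constructor <;> intro h <;> linear_combination h
  simp only [this, auxC, Matrix.of_apply]
  simp

theorem auxC_mul_ne (α α' : F) (hne : α ≠ α') (p r : F × F) :
    (auxC α * auxC α') p r = 1 := by
  rw [auxC_mul_apply]
  have h0 : α - α' ≠ 0 := sub_ne_zero.2 hne
  have : ∀ c : F, (r.2 - p.2 - α * (c - p.1) = α' * (r.1 - c)) ↔
      c = (r.2 - p.2 + α * p.1 - α' * r.1) / (α - α') := by
    intro c
    rw [eq_div_iff h0]
    constructor <;> intro h <;> linear_combination -h
  simp only [this]
  simp

theorem sum_auxC (p r : F × F) :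
    ∑ α : F, auxC α p r = if p.1 = r.1 then (if p.2 = r.2 then (Fintype.card F : ℝ) else 0) else 1 := by
  simp only [auxC, Matrix.of_apply]
  split_ifs with h1 h2
  · simp [h1, h2]
  · have : r.2 - p.2 ≠ 0 := sub_ne_zero.2 (Ne.symm h2)
    simp [h1, this]
  · have h0 : r.1 - p.1 ≠ 0 := sub_ne_zero.2 (Ne.symm h1)
    have : ∀ c : F, (r.2 - p.2 = c * (r.1 - p.1)) ↔ c = (r.2 - p.2) / (r.1 - p.1) := by
      intro c
      rw [eq_div_iff h0, eq_comm]
    simp only [this]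
    simp

theorem sum_gg (ψ : {x : K // x ≠ 0} ≃ F) (p r : F × F) :
    ∑ x : K, gg ψ x p r = ∑ α : F, auxC α p r := by
  rw [← Equiv.sum_comp ψ, ← Fintype.sum_subtype_add_sum_subtype (fun x : K => x ≠ 0)]
  have h2 : ∑ i : {x : K // ¬ x ≠ 0}, gg ψ i.1 p r = 0 := by
    apply Finset.sum_eq_zero
    intro i _
    simp [gg, i.2]
  rw [h2, add_zero]
  apply Finset.sum_congr rfl
  intro i _
  simp [gg, i.2]

theorem gg_mul_self (ψ : {x : K // x ≠ 0} ≃ F) (x : K) (p r : F × F) :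
    (gg ψ x * gg ψ x) p r = (Fintype.card F : ℝ) * gg ψ x p r := by
  unfold gg
  split_ifs
  · exact auxC_mul_self _ _ _
  · simp

theorem gg_mul_ne (ψ : {x : K // x ≠ 0} ≃ F) (x y : K) (hxy : x ≠ y) (p r : F × F) :
    (gg ψ x * gg ψ y) p r = if x ≠ 0 ∧ y ≠ 0 then 1 else 0 := by
  unfold gg
  by_cases hx : x = 0
  · simp [hx]
  by_cases hy : y = 0
  · simp [hy]
  simp only [ne_eq, hx, hy, not_false_eq_true, dite_true, and_self, if_true]
  apply auxC_mul_ne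
  intro h
  exact hxy (congrArg Subtype.val (ψ.injective h))

theorem NN_mul_apply (ψ : {x : K // x ≠ 0} ≃ F) (β a b : K) (hβ : β ≠ 0) (p r : F × F) :
    (NN ψ β * NN ψ (-β)) (a, p) (b, r) =
      ∑ x : K, (gg ψ x * gg ψ (x - β * (b - a))) p r := by
  rw [Matrix.mul_apply, Fintype.sum_prod_type]
  rw [← Equiv.sum_comp ((Equiv.addLeft (-a)).trans (Equiv.mulLeft₀ β hβ))
    (fun x => (gg ψ x * gg ψ (x - β * (b - a))) p r)]
  apply Finset.sum_congr rfl
  intro c _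
  rw [Matrix.mul_apply]
  apply Finset.sum_congr rfl
  intro w _
  rw [NN_apply, NN_apply]
  have : -β * (-c + b) = β * (-a + c) - β * (b - a) := by ring
  rw [this]
  rfl

end helpers

/-- In the consecutive prime power construction, `N_βᵀ = N_{−β}` and
`N_β · N_{−β} = q²·I − q·(I_{q+1} ⊗ I_q ⊗ J_q) + I_{q+1} ⊗ J_{q²} + (q−1)·J`. -/
theorem NN_transpose_mul_neg {F K : Type*} [Field F] [Fintype F] [DecidableEq F]
    [Field K] [Fintype K] [DecidableEq K]
    (hcard : Fintype.card K = Fintype.card F + 1)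
    (ψ : {x : K // x ≠ 0} ≃ F) (β : K) (hβ : β ≠ 0) :
    (NN ψ β)ᵀ = NN ψ (-β) ∧
    NN ψ β * NN ψ (-β) =
      (Fintype.card F : ℝ) ^ 2 • (1 : Matrix (K × (F × F)) (K × (F × F)) ℝ) -
        (Fintype.card F : ℝ) •
          ((1 : Matrix K K ℝ) ⊗ₖ ((1 : Matrix F F ℝ) ⊗ₖ allOnes F)) +
        (1 : Matrix K K ℝ) ⊗ₖ allOnes (F × F) +
        ((Fintype.card F : ℝ) - 1) • allOnes (K × (F × F)) := by
  constructor
  · ext ⟨a, p⟩ ⟨b, r⟩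
    rw [Matrix.transpose_apply, NN_apply, NN_apply, gg_symm]
    congr 1
    ring_nf
  · ext ⟨a, p⟩ ⟨b, r⟩
    rw [NN_mul_apply ψ β a b hβ]
    obtain ⟨p1, p2⟩ := p
    obtain ⟨r1, r2⟩ := r
    simp only [Matrix.add_apply, Matrix.sub_apply, Matrix.smul_apply, Matrix.kroneckerMap_apply,
      allOnes, Matrix.of_apply, Matrix.one_apply, smul_eq_mul, Prod.mk.injEq]
    by_cases hab : a = b
    · subst hab
      simp only [sub_self, mul_zero, sub_zero, gg_mul_self]
      rw [← Finset.mul_sum, sum_gg, sum_auxC]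
      by_cases h1 : p1 = r1 <;> by_cases h2 : p2 = r2 <;> simp [h1, h2] <;> ring
    · have hd : β * (b - a) ≠ 0 := mul_ne_zero hβ (sub_ne_zero.2 (Ne.symm hab))
      have h3 : ∀ x : K, x ≠ x - β * (b - a) := by
        intro x hx
        exact hd (by linear_combination hx)
      have h4 : ∀ x : K, (gg ψ x * gg ψ (x - β * (b - a))) (p1, p2) (r1, r2) =
          1 - (if x = 0 then 1 else 0) - (if x = β * (b - a) then 1 else 0) := by
        intro x
        rw [gg_mul_ne ψ _ _ (h3 x)]
        by_cases hx : x = 0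
        · subst hx
          simp [hd.symm]
        · by_cases hy : x = β * (b - a)
          · rw [← hy]
            simp [hx]
          · simp [hx, hy, sub_eq_zero]
      simp only [h4, Finset.sum_sub_distrib]
      simp [hab, hcard]
end
end

section
/- In the consecutive prime power construction, for all nonzero β, β' ∈ K with β + β' ≠ 0, one has N_β · N_{β'} = q·N_{ββ'/(β+β')} + 2·(I_{q+1} ⊗ J_{q²}) + (q−2)·J_{(q+1)q²}. -/
open Matrix Kronecker BigOperators

noncomputable section

theorem auxC_mul_apply_s16 {F : Type*} [Field F] [Fintype F] [DecidableEq F] (α α' : F)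
    (x y : F × F) : (auxC α * auxC α') x y =
      if α = α' then (Fintype.card F : ℝ) * auxC α x y else 1 := by
  obtain ⟨a, u⟩ := x
  obtain ⟨b, v⟩ := y
  have h1 : (auxC α * auxC α') (a, u) (b, v) =
      ∑ c : F, if v - u = α * (c - a) + α' * (b - c) then (1 : ℝ) else 0 := by
    rw [Matrix.mul_apply, Fintype.sum_prod_type]
    refine Finset.sum_congr rfl fun c _ => ?_
    rw [Finset.sum_eq_single (u + α * (c - a))]
    · have e : (v - (u + α * (c - a)) = α' * (b - c)) ↔
          (v - u = α * (c - a) + α' * (b - c)) := by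
        constructor <;> intro h <;> linear_combination h
      simp [auxC, e]
    · intro w _ hw
      have : ¬ (w - u = α * (c - a)) := fun h => hw (by linear_combination h)
      simp [auxC, this]
    · simp
  rw [h1]
  split_ifs with h
  · subst h
    have e : ∀ c : F, (v - u = α * (c - a) + α * (b - c)) ↔ (v - u = α * (b - a)) := by
      intro c
      constructor <;> intro h <;> linear_combination h
    simp [auxC, e]
  · have h' : α - α' ≠ 0 := sub_ne_zero.2 h
    have e : ∀ c : F, (v - u = α * (c - a) + α' * (b - c)) ↔
        (c = (v - u + α * a - α' * b) / (α - α')) := by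
      intro c
      rw [eq_div_iff h']
      constructor <;> intro h <;> linear_combination -h
    simp [e]

/-- Extension of the family of auxiliary matrices by zero. -/
def GG {F K : Type*} [Field F] [Fintype F] [DecidableEq F]
    [Field K] [DecidableEq K]
    (ψ : {x : K // x ≠ 0} ≃ F) (k : K) : Matrix (F × F) (F × F) ℝ :=
  if h : k ≠ 0 then auxC (ψ ⟨k, h⟩) else 0

theorem NN_apply_GG {F K : Type*} [Field F] [Fintype F] [DecidableEq F]
    [Field K] [Fintype K] [DecidableEq K]
    (ψ : {x : K // x ≠ 0} ≃ F) (β a b : K) (x y : F × F) :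
    NN ψ β (a, x) (b, y) = GG ψ (β * (-a + b)) x y := by
  simp only [NN, Matrix.sum_apply, Matrix.kroneckerMap_apply, permP, Matrix.of_apply, GG]
  split_ifs with h
  · rw [Finset.sum_eq_single ⟨_, h⟩]
    · simp
    · intro c _ hc
      rw [if_neg, zero_mul]
      intro h2
      exact hc (Subtype.ext h2.symm)
    · simp
  · rw [Finset.sum_eq_zero]
    · rfl
    · intro c _
      rw [if_neg, zero_mul]
      intro h2
      exact h (h2 ▸ c.2)

theorem GG_mul_apply {F K : Type*} [Field F] [Fintype F] [DecidableEq F]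
    [Field K] [DecidableEq K]
    (ψ : {x : K // x ≠ 0} ≃ F) (k l : K) (x y : F × F) :
    (GG ψ k * GG ψ l) x y = if k = 0 ∨ l = 0 then 0 else
      if k = l then (Fintype.card F : ℝ) * GG ψ k x y else 1 := by
  by_cases hk : k = 0
  · simp [GG, hk]
  by_cases hl : l = 0
  · simp [GG, hl]
  simp [GG, hk, hl, auxC_mul_apply_s16]

/-- In the consecutive prime power construction, for nonzero `β, β'` with `β + β' ≠ 0`,
`N_β · N_{β'} = q·N_{ββ'/(β+β')} + 2·(I_{q+1} ⊗ J_{q²}) + (q−2)·J`. -/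
theorem NN_mul {F K : Type*} [Field F] [Fintype F] [DecidableEq F]
    [Field K] [Fintype K] [DecidableEq K]
    (hcard : Fintype.card K = Fintype.card F + 1)
    (ψ : {x : K // x ≠ 0} ≃ F) (β β' : K) (hβ : β ≠ 0) (hβ' : β' ≠ 0)
    (hs : β + β' ≠ 0) :
    NN ψ β * NN ψ β' =
      (Fintype.card F : ℝ) • NN ψ (β * β' / (β + β')) +
        (2 : ℝ) • ((1 : Matrix K K ℝ) ⊗ₖ allOnes (F × F)) +
        ((Fintype.card F : ℝ) - 2) • allOnes (K × (F × F)) := by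
  ext ⟨a, x⟩ ⟨b, y⟩
  have h1 : (NN ψ β * NN ψ β') (a, x) (b, y) =
      ∑ c : K, (GG ψ (β * (-a + c)) * GG ψ (β' * (-c + b))) x y := by
    rw [Matrix.mul_apply, Fintype.sum_prod_type]
    refine Finset.sum_congr rfl fun c _ => ?_
    simp only [NN_apply_GG, Matrix.mul_apply]
  rw [h1]
  simp only [Matrix.add_apply, Matrix.smul_apply, NN_apply_GG, Matrix.kroneckerMap_apply,
    allOnes, Matrix.of_apply, smul_eq_mul, GG_mul_apply]
  have hK : (Fintype.card K : ℝ) = Fintype.card F + 1 := by exact_mod_cast hcard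
  have ea : ∀ c, β * (-a + c) = 0 ↔ c = a := fun c => by
    rw [mul_eq_zero, or_iff_right hβ, neg_add_eq_zero, eq_comm]
  have eb : ∀ c, β' * (-c + b) = 0 ↔ c = b := fun c => by
    rw [mul_eq_zero, or_iff_right hβ', neg_add_eq_zero]
  have ec : ∀ c, β * (-a + c) = β' * (-c + b) ↔ c = (β' * b + β * a) / (β + β') := fun c => by
    rw [eq_div_iff hs]
    constructor <;> intro h <;> linear_combination h
  simp only [ea, eb, ec]
  by_cases hab : a = b
  · subst hab
    have e0 : (β' * a + β * a) / (β + β') = a := by field_simp; ring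
    have : ∀ c : K, (if c = a ∨ c = a then (0 : ℝ) else
        if c = (β' * a + β * a) / (β + β') then
          (Fintype.card F : ℝ) * GG ψ (β * (-a + c)) x y else 1) =
        1 - if c = a then 1 else 0 := by
      intro c
      rw [e0]
      by_cases h : c = a <;> simp [h]
    simp only [this, Finset.sum_sub_distrib]
    simp [hK, GG]
  · have hba : b - a ≠ 0 := sub_ne_zero.2 (Ne.symm hab)
    set c0 := (β' * b + β * a) / (β + β') with hc0
    have hca : c0 ≠ a := by
      intro h
      rw [hc0, div_eq_iff hs] at h
      exact mul_ne_zero hβ' hba (by linear_combination h)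
    have hcb : c0 ≠ b := by
      intro h
      rw [hc0, div_eq_iff hs] at h
      exact mul_ne_zero hβ hba (by linear_combination -h)
    have hg : β * (-a + c0) = β * β' / (β + β') * (-a + b) := by
      rw [hc0]; field_simp; ring
    have : ∀ c : K, (if c = a ∨ c = b then (0 : ℝ) else
        if c = c0 then
          (Fintype.card F : ℝ) * GG ψ (β * (-a + c)) x y else 1) =
        1 - (if c = a then 1 else 0) - (if c = b then 1 else 0) +
          (if c = c0 then
            (Fintype.card F : ℝ) * GG ψ (β * β' / (β + β') * (-a + b)) x y - 1 else 0) := by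
      intro c
      by_cases h : c = a
      · subst h
        simp [hab, hca.symm]
      by_cases h' : c = b
      · subst h'
        simp [h, hcb.symm]
      by_cases h2 : c = c0
      · rw [h2, hg]
        simp [hca, hcb]
      · simp [h, h', h2]
    simp only [this, Finset.sum_sub_distrib, Finset.sum_add_distrib]
    simp [hK, hab]
    ring
end
end

section
/- In the consecutive prime power construction: (a) for every nonzero β ∈ K, N_β · (I_{q+1} ⊗ I_q ⊗ J_q) = (I_{q+1} ⊗ I_q ⊗ J_q) · N_β = J_{(q+1)q²} − I_{q+1} ⊗ J_{q²}; (b) for every nonzero β ∈ K, N_β · (I_{q+1} ⊗ J_{q²}) = (I_{q+1} ⊗ J_{q²}) · N_β = q·(J_{(q+1)q²} − I_{q+1} ⊗ J_{q²}); (c) Σ_{β∈K∖{0}} N_β = (J_{q+1} − I_{q+1}) ⊗ (q·I_{q²} + (J_q − I_q) ⊗ J_q). -/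
open Matrix Kronecker BigOperators

noncomputable section

theorem permP_sum_right {K : Type*} [Field K] [Fintype K] [DecidableEq K] (β : K) (hβ : β ≠ 0) :
    ∑ γ : {x : K // x ≠ 0}, permP β (γ : K) = allOnes K - 1 := by
  ext a b
  simp only [Matrix.sum_apply, permP, allOnes, Matrix.of_apply, Matrix.sub_apply, Matrix.one_apply]
  by_cases hab : a = b
  · subst hab
    rw [Finset.sum_eq_zero]
    · simp
    · intro γ _
      rw [if_neg]
      intro h
      apply γ.2
      rw [← h]; simp
  · have hne : β * (-a + b) ≠ 0 := by
      apply mul_ne_zero hβ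
      intro h
      apply hab
      linear_combination -h
    rw [Finset.sum_eq_single (⟨_, hne⟩ : {x : K // x ≠ 0})]
    · simp [hab]
    · intro γ _ hγ
      rw [if_neg]
      intro h
      exact hγ (Subtype.ext h.symm)
    · simp

theorem permP_sum_left {K : Type*} [Field K] [Fintype K] [DecidableEq K] (γ : K) (hγ : γ ≠ 0) :
    ∑ β : {x : K // x ≠ 0}, permP (β : K) γ = allOnes K - 1 := by
  ext a b
  simp only [Matrix.sum_apply, permP, allOnes, Matrix.of_apply, Matrix.sub_apply, Matrix.one_apply]
  by_cases hab : a = b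
  · subst hab
    rw [Finset.sum_eq_zero]
    · simp
    · intro β _
      rw [if_neg]
      intro h
      apply hγ
      rw [← h]; simp
  · have hd : -a + b ≠ 0 := by
      intro h
      apply hab
      linear_combination -h
    rw [Finset.sum_eq_single (⟨γ / (-a + b), div_ne_zero hγ hd⟩ : {x : K // x ≠ 0})]
    · simp [hab, div_mul_cancel₀ _ hd]
    · intro β _ hβ
      rw [if_neg]
      intro h
      exact hβ (Subtype.ext ((eq_div_iff hd).2 h))
    · simp

theorem auxC_sum {F : Type*} [Field F] [Fintype F] [DecidableEq F] :
    ∑ α : F, auxC α = (Fintype.card F : ℝ) • (1 : Matrix (F × F) (F × F) ℝ) +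
          (allOnes F - 1) ⊗ₖ allOnes F := by
  ext ⟨a, u⟩ ⟨b, v⟩
  simp only [Matrix.sum_apply, auxC, allOnes, Matrix.of_apply, Matrix.sub_apply, Matrix.one_apply,
    Matrix.add_apply, Matrix.smul_apply, Matrix.kroneckerMap_apply, Prod.mk.injEq]
  by_cases hab : a = b
  · subst hab
    by_cases huv : u = v
    · simp [huv]
    · simp [huv, sub_eq_zero, Ne.symm huv]
  · have hd : b - a ≠ 0 := sub_ne_zero.2 (Ne.symm hab)
    rw [Finset.sum_eq_single ((v - u) / (b - a))]
    · simp [hab, div_mul_cancel₀ _ hd]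
    · intro α _ h
      rw [if_neg]
      intro h'
      exact h ((eq_div_iff hd).2 h'.symm)
    · simp

theorem auxC_mul_IJ {F : Type*} [Field F] [Fintype F] [DecidableEq F] (α : F) :
    auxC α * ((1 : Matrix F F ℝ) ⊗ₖ allOnes F) = allOnes (F × F) := by
  ext ⟨a, u⟩ ⟨b, v⟩
  simp [Matrix.mul_apply, Fintype.sum_prod_type, auxC, allOnes, Matrix.one_apply, sub_eq_iff_eq_add]

theorem IJ_mul_auxC {F : Type*} [Field F] [Fintype F] [DecidableEq F] (α : F) :
    ((1 : Matrix F F ℝ) ⊗ₖ allOnes F) * auxC α = allOnes (F × F) := by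
  ext ⟨a, u⟩ ⟨b, v⟩
  have h : ∀ x y : F, v - x = y ↔ x = v - y := fun x y => by
    constructor <;> intro h <;> linear_combination -h
  simp [Matrix.mul_apply, Fintype.sum_prod_type, auxC, allOnes, Matrix.one_apply, h]

theorem auxC_mul_J {F : Type*} [Field F] [Fintype F] [DecidableEq F] (α : F) :
    auxC α * allOnes (F × F) = (Fintype.card F : ℝ) • allOnes (F × F) := by
  ext ⟨a, u⟩ ⟨b, v⟩
  rw [Matrix.mul_apply, Fintype.sum_prod_type]
  simp [auxC, allOnes, sub_eq_iff_eq_add]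

theorem J_mul_auxC {F : Type*} [Field F] [Fintype F] [DecidableEq F] (α : F) :
    allOnes (F × F) * auxC α = (Fintype.card F : ℝ) • allOnes (F × F) := by
  ext ⟨a, u⟩ ⟨b, v⟩
  have h : ∀ x y : F, v - x = y ↔ x = v - y := fun x y => by
    constructor <;> intro h <;> linear_combination -h
  rw [Matrix.mul_apply, Fintype.sum_prod_type]
  simp [auxC, allOnes, h]

theorem sum_kron {ι m n : Type*} [Fintype ι] (A : ι → Matrix m m ℝ) (B : Matrix n n ℝ) :
    ∑ i, A i ⊗ₖ B = (∑ i, A i) ⊗ₖ B := by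
  ext ⟨a, u⟩ ⟨b, v⟩
  simp [Matrix.sum_apply, Finset.sum_mul]

theorem kron_sum {ι m n : Type*} [Fintype ι] (A : Matrix m m ℝ) (B : ι → Matrix n n ℝ) :
    ∑ i, A ⊗ₖ B i = A ⊗ₖ (∑ i, B i) := by
  ext ⟨a, u⟩ ⟨b, v⟩
  simp [Matrix.sum_apply, Finset.mul_sum]

theorem JI_kron {K G : Type*} [DecidableEq K] :
    (allOnes K - 1) ⊗ₖ allOnes G = allOnes (K × G) - (1 : Matrix K K ℝ) ⊗ₖ allOnes G := by
  ext ⟨a, u⟩ ⟨b, v⟩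
  simp [allOnes]

/-- In the consecutive prime power construction:
(a) `N_β · (I_{q+1} ⊗ I_q ⊗ J_q) = (I_{q+1} ⊗ I_q ⊗ J_q) · N_β = J − I_{q+1} ⊗ J_{q²}`;
(b) `N_β · (I_{q+1} ⊗ J_{q²}) = (I_{q+1} ⊗ J_{q²}) · N_β = q·(J − I_{q+1} ⊗ J_{q²})`;
(c) `Σ_{β∈K∖{0}} N_β = (J_{q+1} − I_{q+1}) ⊗ (q·I_{q²} + (J_q − I_q) ⊗ J_q)`. -/
theorem NN_mul_blockdiag_sum {F K : Type*} [Field F] [Fintype F] [DecidableEq F]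
    [Field K] [Fintype K] [DecidableEq K]
    (hcard : Fintype.card K = Fintype.card F + 1)
    (ψ : {x : K // x ≠ 0} ≃ F) :
    (∀ β : K, β ≠ 0 →
      NN ψ β * ((1 : Matrix K K ℝ) ⊗ₖ ((1 : Matrix F F ℝ) ⊗ₖ allOnes F)) =
          allOnes (K × (F × F)) - (1 : Matrix K K ℝ) ⊗ₖ allOnes (F × F) ∧
        ((1 : Matrix K K ℝ) ⊗ₖ ((1 : Matrix F F ℝ) ⊗ₖ allOnes F)) * NN ψ β =
          allOnes (K × (F × F)) - (1 : Matrix K K ℝ) ⊗ₖ allOnes (F × F)) ∧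
    (∀ β : K, β ≠ 0 →
      NN ψ β * ((1 : Matrix K K ℝ) ⊗ₖ allOnes (F × F)) =
          (Fintype.card F : ℝ) •
            (allOnes (K × (F × F)) - (1 : Matrix K K ℝ) ⊗ₖ allOnes (F × F)) ∧
        ((1 : Matrix K K ℝ) ⊗ₖ allOnes (F × F)) * NN ψ β =
          (Fintype.card F : ℝ) •
            (allOnes (K × (F × F)) - (1 : Matrix K K ℝ) ⊗ₖ allOnes (F × F))) ∧
    (∑ β : {x : K // x ≠ 0}, NN ψ (β : K)) =
      (allOnes K - 1) ⊗ₖ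
        ((Fintype.card F : ℝ) • (1 : Matrix (F × F) (F × F) ℝ) +
          (allOnes F - 1) ⊗ₖ allOnes F) := by
  refine ⟨fun β hβ => ⟨?_, ?_⟩, fun β hβ => ⟨?_, ?_⟩, ?_⟩
  · simp only [NN, Finset.sum_mul, ← Matrix.mul_kronecker_mul, auxC_mul_IJ, mul_one]
    rw [sum_kron, permP_sum_right β hβ, JI_kron]
  · simp only [NN, Finset.mul_sum, ← Matrix.mul_kronecker_mul, IJ_mul_auxC, one_mul]
    rw [sum_kron, permP_sum_right β hβ, JI_kron]
  · simp only [NN, Finset.sum_mul, ← Matrix.mul_kronecker_mul, auxC_mul_J, mul_one]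
    rw [sum_kron, permP_sum_right β hβ, Matrix.kronecker_smul, JI_kron]
  · simp only [NN, Finset.mul_sum, ← Matrix.mul_kronecker_mul, J_mul_auxC, one_mul]
    rw [sum_kron, permP_sum_right β hβ, Matrix.kronecker_smul, JI_kron]
  · simp only [NN]
    rw [Finset.sum_comm]
    simp only [sum_kron]
    rw [Finset.sum_congr rfl (fun γ _ => by rw [permP_sum_left γ.1 γ.2]), kron_sum,
      Equiv.sum_comp ψ (fun α => auxC α), auxC_sum]
end
end
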